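/- arXiv:2003.00249 — 6 statements merged into one kernel-verified Lean document; each statement's English description precedes it below -/
import Mathlib

section
/- Let A be a commutative ring in which 2 = 0, let a₀, a₁, a₂, a₃ ∈ A and let α, β, γ, δ ∈ A satisfy αδ + βγ = 1. Define the transformed coefficients a₀', a₁', a₂', a₃' ∈ A by the identity a₀'x₁³ + a₁'x₁²x₂ + a₂'x₁x₂² + a₃'x₂³ = a(αx₁ + βx₂, γx₁ + δx₂) in A[x₁,x₂], where a = a₀x₁³ + a₁x₁²x₂ + a₂x₁x₂² + a₃x₂³. Then a₀'a₃' + a₁'a₂' = a₀a₃ + a₁a₂, i.e., the invariant K₁ is invariant under the action of SL(2) on binary cubic forms in characteristic 2. -/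
/-!
Every binary cubic is `xᵀ M x⁽²⁾` with `M = !![a₀, a₂; a₁, a₃]`, `x = (x₁, x₂)` and
`x⁽²⁾ = (x₁², x₂²)`, and in characteristic `2` its `K₁` is `det M`. Squaring is then additive, so
the substitution `x ↦ g x` takes `x⁽²⁾` to `g⁽²⁾ x⁽²⁾`, where `g⁽²⁾` has the squared entries of
`g`, and hence `M` to `gᵀ M g⁽²⁾`. Taking determinants multiplies `K₁` by
`det g * det g⁽²⁾ = (det g)³`.
-/

open MvPolynomial

section FrobeniusForm

open Matrix

variable {ι A : Type*} [Fintype ι]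

/-- The form `∑ i j, M i j * X i * X j ^ q` attached to a square matrix `M`. For `q = p` the
characteristic, these forms are stable under linear substitutions. -/
noncomputable def frobeniusForm [CommSemiring A] (q : ℕ) (M : Matrix ι ι A) : MvPolynomial ι A :=
  X ⬝ᵥ (M.map C *ᵥ (X ^ q))

lemma coeff_frobeniusForm [CommSemiring A] {q : ℕ} (hq : 2 ≤ q) (M : Matrix ι ι A) (i j : ι) :
    coeff (Finsupp.single i 1 + Finsupp.single j q) (frobeniusForm q M) = M i j := by
  classical
  have hmonomial (k l : ι) : X k * (C (M k l) * X l ^ q) =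
      monomial (Finsupp.single k 1 + Finsupp.single l q) (M k l) := by
    rw [mul_left_comm, X_pow_eq_monomial, X, monomial_mul, C_mul_monomial, mul_one, mul_one]
  have hexponent (k l : ι) : Finsupp.single k 1 + Finsupp.single l q =
      Finsupp.single i 1 + Finsupp.single j q ↔ k = i ∧ l = j := by
    rw [Finsupp.single_add_single_eq_single_add_single one_ne_zero (by lia)]
    lia
  simp only [frobeniusForm, dotProduct, mulVec, map_apply, Pi.pow_apply, Finset.mul_sum,
    hmonomial, coeff_sum, coeff_monomial, hexponent, ite_and,
    Finset.sum_ite_irrel, Finset.sum_ite_eq', Finset.sum_const_zero, Finset.mem_univ, if_true]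

lemma frobeniusForm_injective [CommSemiring A] {q : ℕ} (hq : 2 ≤ q) :
    Function.Injective (frobeniusForm q : Matrix ι ι A → MvPolynomial ι A) := fun M N h ↦ by
  ext i j
  rw [← coeff_frobeniusForm hq M, h, coeff_frobeniusForm hq]

lemma bind₁_frobeniusForm [CommSemiring A] (p : ℕ) [ExpChar A p] (g M : Matrix ι ι A) :
    bind₁ (g.map C *ᵥ X) (frobeniusForm p M) =
      frobeniusForm p (gᵀ * M * g.map (frobenius A p)) := by
  have hpow : (g.map C *ᵥ X : ι → MvPolynomial ι A) ^ p =
      (g.map (frobenius A p)).map C *ᵥ X ^ p := by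
    ext1 i
    simp [mulVec, dotProduct, sum_pow_char, mul_pow, frobenius_def]
  calc bind₁ (g.map C *ᵥ X) (frobeniusForm p M)
      = (g.map C *ᵥ X) ⬝ᵥ (M.map C *ᵥ (g.map C *ᵥ X) ^ p) := by
        simp [frobeniusForm, dotProduct, mulVec]
    _ = (g.map C *ᵥ X) ⬝ᵥ (M.map C *ᵥ ((g.map (frobenius A p)).map C *ᵥ X ^ p)) := by rw [hpow]
    _ = frobeniusForm p (gᵀ * M * g.map (frobenius A p)) := by
        rw [frobeniusForm, Matrix.map_mul, Matrix.map_mul, ← mulVec_mulVec, ← mulVec_mulVec,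
          dotProduct_mulVec X, transpose_map, vecMul_transpose]

lemma det_eq_of_frobeniusForm_eq_bind₁ [CommRing A] [DecidableEq ι] (p : ℕ) [Fact p.Prime]
    [CharP A p] {g M N : Matrix ι ι A}
    (h : frobeniusForm p N = bind₁ (g.map C *ᵥ X) (frobeniusForm p M)) :
    N.det = g.det ^ (p + 1) * M.det := by
  rw [bind₁_frobeniusForm] at h
  rw [frobeniusForm_injective (Fact.out : p.Prime).two_le h, det_mul, det_mul, det_transpose,
    ← RingHom.mapMatrix_apply, ← RingHom.map_det, frobenius_def]
  ring

lemma frobeniusForm_two_fin_two [CommSemiring A] (a₀ a₁ a₂ a₃ : A) :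
    frobeniusForm 2 !![a₀, a₂; a₁, a₃] =
      C a₀ * X 0 ^ 3 + C a₁ * X 0 ^ 2 * X 1 + C a₂ * X 0 * X 1 ^ 2 + C a₃ * X 1 ^ 3 := by
  simp only [frobeniusForm, dotProduct, mulVec, Fin.sum_univ_two, map_apply, Pi.pow_apply,
    of_apply, cons_val_zero, cons_val_one]
  ring

end FrobeniusForm

theorem K1_SL2_invariant_general (A : Type*) [CommRing A] (h2 : (2 : A) = 0)
    (a₀ a₁ a₂ a₃ α β γ δ a₀' a₁' a₂' a₃' : A)
    (htrans :
      (C a₀' * X 0 ^ 3 + C a₁' * X 0 ^ 2 * X 1 + C a₂' * X 0 * X 1 ^ 2 + C a₃' * X 1 ^ 3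
        : MvPolynomial (Fin 2) A) =
      bind₁ ![C α * X 0 + C β * X 1, C γ * X 0 + C δ * X 1]
        (C a₀ * X 0 ^ 3 + C a₁ * X 0 ^ 2 * X 1 + C a₂ * X 0 * X 1 ^ 2 + C a₃ * X 1 ^ 3)) :
    a₀' * a₃' + a₁' * a₂' = (α * δ + β * γ) ^ 3 * (a₀ * a₃ + a₁ * a₂) := by
  nontriviality A
  have : CharP A 2 := CharTwo.of_one_ne_zero_of_two_eq_zero one_ne_zero h2
  have hsubst : ![C α * X 0 + C β * X 1, C γ * X 0 + C δ * X 1] =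
      (!![α, β; γ, δ].map C).mulVec (X : Fin 2 → MvPolynomial (Fin 2) A) := by
    ext1 i
    fin_cases i <;> simp [Matrix.mulVec, dotProduct]
  rw [hsubst, ← frobeniusForm_two_fin_two, ← frobeniusForm_two_fin_two] at htrans
  simpa only [Matrix.det_fin_two_of, CharTwo.sub_eq_add, mul_comm a₂, mul_comm a₂'] using
    det_eq_of_frobeniusForm_eq_bind₁ 2 htrans

/-- In characteristic 2, the invariant `K₁ = a₀a₃ + a₁a₂` of a binary cubic
`a₀x₁³ + a₁x₁²x₂ + a₂x₁x₂² + a₃x₂³` is invariant under the SL(2)-action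
`x₁ ↦ αx₁ + βx₂`, `x₂ ↦ γx₁ + δx₂` (with `αδ + βγ = 1`). -/
theorem K1_SL2_invariant (A : Type*) [CommRing A] (h2 : (2 : A) = 0)
    (a₀ a₁ a₂ a₃ α β γ δ a₀' a₁' a₂' a₃' : A)
    (hdet : α * δ + β * γ = 1)
    (htrans :
      (C a₀' * X 0 ^ 3 + C a₁' * X 0 ^ 2 * X 1 + C a₂' * X 0 * X 1 ^ 2 + C a₃' * X 1 ^ 3
        : MvPolynomial (Fin 2) A) =
      bind₁ ![C α * X 0 + C β * X 1, C γ * X 0 + C δ * X 1]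
        (C a₀ * X 0 ^ 3 + C a₁ * X 0 ^ 2 * X 1 + C a₂ * X 0 * X 1 ^ 2 + C a₃ * X 1 ^ 3)) :
    a₀' * a₃' + a₁' * a₂' = a₀ * a₃ + a₁ * a₂ := by
  simpa only [hdet, one_pow, one_mul] using
    K1_SL2_invariant_general A h2 a₀ a₁ a₂ a₃ α β γ δ a₀' a₁' a₂' a₃' htrans
end

section
/- Let A be a commutative ring in which 2 = 0, let a₀, a₁, a₂, a₃ ∈ A and let α, β, γ, δ ∈ A satisfy αδ + βγ = 1. Define the transformed coefficients a₀', a₁', a₂', a₃' ∈ A by the identity a₀'x₁³ + a₁'x₁²x₂ + a₂'x₁x₂² + a₃'x₂³ = a(αx₁ + βx₂, γx₁ + δx₂) in A[x₁,x₂], where a = a₀x₁³ + a₁x₁²x₂ + a₂x₁x₂² + a₃x₂³. Let q(a) denote the binary quadratic (a₀a₂ + a₁²)x₁² + (a₀a₃ + a₁a₂)x₁x₂ + (a₁a₃ + a₂²)x₂². Then q(a') = q(a)(αx₁ + βx₂, γx₁ + δx₂) in A[x₁,x₂]; that is, the quadratic covariant (a₀a₂ + a₁²)x₁² + (a₀a₃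 + a₁a₂)x₁x₂ + (a₁a₃ + a₂²)x₂² of a binary cubic is SL(2)-equivariant in characteristic 2. -/
/-!
To a binary cubic `F` attach the matrix `H` of its halved second partial derivatives, which exists
over any commutative ring because its entries are integral in the coefficients of `F`. By the chain
rule, the substitution `x ↦ g x` turns `H` into `gᵀ H(g x) g`, so `det H` is multiplied by
`(det g) ^ 2` besides being transformed by `g`. When `2 = 0`, `det H` is the quadratic covariant
and `det g = αδ + βγ`.
-/

open MvPolynomial

section CommSemiring

variable {A : Type*} [CommSemiring A]

/-- The binary cubic form `a x₁³ + b x₁² x₂ + c x₁ x₂² + d x₂³`. Its coefficients are stored in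
Mathlib's `Cubic`, so that `Cubic.toPoly` is the dehomogenization at `x₂ = 1`. -/
noncomputable def binaryCubic (P : Cubic A) : MvPolynomial (Fin 2) A :=
  C P.a * X 0 ^ 3 + C P.b * X 0 ^ 2 * X 1 + C P.c * X 0 * X 1 ^ 2 + C P.d * X 1 ^ 3

/-- The coefficients of the transform of the binary cubic of `P` under the linear substitution
`xᵢ ↦ ∑ j, g i j * xⱼ`, which is `bind₁ g.toMvPolynomial`. -/
def substCubic (g : Matrix (Fin 2) (Fin 2) A) (P : Cubic A) : Cubic A where
  a := P.a * g 0 0 ^ 3 + P.b * g 0 0 ^ 2 * g 1 0 + P.c * g 0 0 * g 1 0 ^ 2 + P.d * g 1 0 ^ 3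
  b := 3 * P.a * g 0 0 ^ 2 * g 0 1 + P.b * (g 0 0 ^ 2 * g 1 1 + 2 * g 0 0 * g 0 1 * g 1 0)
    + P.c * (2 * g 0 0 * g 1 0 * g 1 1 + g 0 1 * g 1 0 ^ 2) + 3 * P.d * g 1 0 ^ 2 * g 1 1
  c := 3 * P.a * g 0 0 * g 0 1 ^ 2 + P.b * (2 * g 0 0 * g 0 1 * g 1 1 + g 0 1 ^ 2 * g 1 0)
    + P.c * (g 0 0 * g 1 1 ^ 2 + 2 * g 0 1 * g 1 0 * g 1 1) + 3 * P.d * g 1 0 * g 1 1 ^ 2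
  d := P.a * g 0 1 ^ 3 + P.b * g 0 1 ^ 2 * g 1 1 + P.c * g 0 1 * g 1 1 ^ 2 + P.d * g 1 1 ^ 3

/-- Half the Hessian matrix of the binary cubic of `P`. It is given by its entries, since dividing
the second partial derivatives by `2` makes no sense over a general `A`. -/
noncomputable def halfHessian (P : Cubic A) : Matrix (Fin 2) (Fin 2) (MvPolynomial (Fin 2) A) :=
  !![C (3 * P.a) * X 0 + C P.b * X 1, C P.b * X 0 + C P.c * X 1;
    C P.b * X 0 + C P.c * X 1, C P.c * X 0 + C (3 * P.d) * X 1]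

/-- The quadratic covariant `q` of the binary cubic of `P`, in the sign-free form it takes when
`2 = 0`. -/
noncomputable def quadraticCovariant (P : Cubic A) : MvPolynomial (Fin 2) A :=
  C (P.a * P.c + P.b ^ 2) * X 0 ^ 2 + C (P.a * P.d + P.b * P.c) * X 0 * X 1
    + C (P.b * P.d + P.c ^ 2) * X 1 ^ 2

theorem binaryCubic_injective : Function.Injective (binaryCubic (A := A)) := by
  intro P Q h
  have aeval_binaryCubic (R : Cubic A) :
      aeval ![Polynomial.X, 1] (binaryCubic R) = R.toPoly := by
    simp [binaryCubic, Cubic.toPoly]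
  rw [← Cubic.toPoly_injective, ← aeval_binaryCubic, ← aeval_binaryCubic, h]

theorem toMvPolynomial_fin_two (g : Matrix (Fin 2) (Fin 2) A) :
    g.toMvPolynomial = ![C (g 0 0) * X 0 + C (g 0 1) * X 1, C (g 1 0) * X 0 + C (g 1 1) * X 1] := by
  ext1 i
  fin_cases i <;> simp [Matrix.toMvPolynomial, C_mul_X_eq_monomial]

theorem bind₁_binaryCubic (g : Matrix (Fin 2) (Fin 2) A) (P : Cubic A) :
    bind₁ g.toMvPolynomial (binaryCubic P) = binaryCubic (substCubic g P) := by
  simp only [binaryCubic, substCubic, toMvPolynomial_fin_two, map_add, map_mul, map_pow,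
    bind₁_X_right, bind₁_C_right, Matrix.cons_val_zero, Matrix.cons_val_one, map_ofNat]
  ring

open Matrix in
theorem halfHessian_substCubic (g : Matrix (Fin 2) (Fin 2) A) (P : Cubic A) :
    halfHessian (substCubic g P) =
      (g.map C)ᵀ * (halfHessian P).map (bind₁ g.toMvPolynomial) * g.map C := by
  ext1 i j
  fin_cases i <;> fin_cases j <;>
    simp only [halfHessian, substCubic, toMvPolynomial_fin_two, mul_apply, Fin.sum_univ_two,
      transpose_apply, map_apply, of_apply, cons_val', cons_val_zero, cons_val_one,
      cons_val_fin_one, Fin.zero_eta, Fin.mk_one, Fin.isValue, map_add, map_mul, map_pow,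
      map_ofNat, bind₁_X_right, bind₁_C_right] <;>
    ring

end CommSemiring

section CommRing

variable {A : Type*} [CommRing A]

theorem det_halfHessian_substCubic (g : Matrix (Fin 2) (Fin 2) A) (P : Cubic A) :
    (halfHessian (substCubic g P)).det =
      C (g.det ^ 2) * bind₁ g.toMvPolynomial (halfHessian P).det := by
  have det_map_C : (g.map C).det = (C g.det : MvPolynomial (Fin 2) A) := (C.map_det g).symm
  have det_map_bind₁ : ((halfHessian P).map (bind₁ g.toMvPolynomial)).det =
      bind₁ g.toMvPolynomial (halfHessian P).det := ((bind₁ g.toMvPolynomial).map_det _).symm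
  rw [halfHessian_substCubic, Matrix.det_mul, Matrix.det_mul, Matrix.det_transpose, det_map_C,
    det_map_bind₁, map_pow]
  ring

theorem det_halfHessian (P : Cubic A) :
    (halfHessian P).det = C (3 * P.a * P.c - P.b ^ 2) * X 0 ^ 2
      + C (9 * P.a * P.d - P.b * P.c) * X 0 * X 1 + C (3 * P.b * P.d - P.c ^ 2) * X 1 ^ 2 := by
  simp only [halfHessian, Matrix.det_fin_two_of, map_sub, map_mul, map_pow, map_ofNat]
  ring

theorem quadraticCovariant_eq_det_halfHessian (h2 : (2 : A) = 0) (P : Cubic A) :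
    quadraticCovariant P = (halfHessian P).det := by
  have coeff₀ : P.a * P.c + P.b ^ 2 = 3 * P.a * P.c - P.b ^ 2 := by
    linear_combination (P.b ^ 2 - P.a * P.c) * h2
  have coeff₁ : P.a * P.d + P.b * P.c = 9 * P.a * P.d - P.b * P.c := by
    linear_combination (P.b * P.c - 4 * P.a * P.d) * h2
  have coeff₂ : P.b * P.d + P.c ^ 2 = 3 * P.b * P.d - P.c ^ 2 := by
    linear_combination (P.c ^ 2 - P.b * P.d) * h2
  rw [quadraticCovariant, det_halfHessian, coeff₀, coeff₁, coeff₂]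

theorem quadratic_covariant_SL2_equivariant_general (h2 : (2 : A) = 0)
    (g : Matrix (Fin 2) (Fin 2) A) {P P' : Cubic A}
    (htrans : binaryCubic P' = bind₁ g.toMvPolynomial (binaryCubic P)) :
    quadraticCovariant P' = C (g.det ^ 2) * bind₁ g.toMvPolynomial (quadraticCovariant P) := by
  obtain rfl : P' = substCubic g P :=
    binaryCubic_injective (htrans.trans (bind₁_binaryCubic g P))
  rw [quadraticCovariant_eq_det_halfHessian h2, quadraticCovariant_eq_det_halfHessian h2,
    det_halfHessian_substCubic]

end CommRing

/-- In characteristic 2, the quadratic covariant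
`q(a) = (a₀a₂ + a₁²)x₁² + (a₀a₃ + a₁a₂)x₁x₂ + (a₁a₃ + a₂²)x₂²` of a binary cubic
`a = a₀x₁³ + a₁x₁²x₂ + a₂x₁x₂² + a₃x₂³` is SL(2)-equivariant:
if `a'` is the transform of `a` under `x₁ ↦ αx₁ + βx₂`, `x₂ ↦ γx₁ + δx₂`
(with `αδ + βγ = 1`), then `q(a')` is the transform of `q(a)`. -/
theorem quadratic_covariant_SL2_equivariant (A : Type*) [CommRing A] (h2 : (2 : A) = 0)
    (a₀ a₁ a₂ a₃ α β γ δ a₀' a₁' a₂' a₃' : A)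
    (hdet : α * δ + β * γ = 1)
    (htrans :
      (C a₀' * X 0 ^ 3 + C a₁' * X 0 ^ 2 * X 1 + C a₂' * X 0 * X 1 ^ 2 + C a₃' * X 1 ^ 3
        : MvPolynomial (Fin 2) A) =
      bind₁ ![C α * X 0 + C β * X 1, C γ * X 0 + C δ * X 1]
        (C a₀ * X 0 ^ 3 + C a₁ * X 0 ^ 2 * X 1 + C a₂ * X 0 * X 1 ^ 2 + C a₃ * X 1 ^ 3)) :
    (C (a₀' * a₂' + a₁' ^ 2) * X 0 ^ 2 + C (a₀' * a₃' + a₁' * a₂') * X 0 * X 1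
        + C (a₁' * a₃' + a₂' ^ 2) * X 1 ^ 2 : MvPolynomial (Fin 2) A) =
      bind₁ ![C α * X 0 + C β * X 1, C γ * X 0 + C δ * X 1]
        (C (a₀ * a₂ + a₁ ^ 2) * X 0 ^ 2 + C (a₀ * a₃ + a₁ * a₂) * X 0 * X 1
          + C (a₁ * a₃ + a₂ ^ 2) * X 1 ^ 2) := by
  have det_eq_one : Matrix.det !![α, β; γ, δ] = 1 := by
    rw [Matrix.det_fin_two_of]
    linear_combination hdet - β * γ * h2
  have subst_eq : Matrix.toMvPolynomial !![α, β; γ, δ] =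
      ![C α * X 0 + C β * X 1, C γ * X 0 + C δ * X 1] := toMvPolynomial_fin_two _
  rw [← subst_eq] at htrans ⊢
  simpa only [quadraticCovariant, det_eq_one, one_pow, map_one, one_mul] using
    quadratic_covariant_SL2_equivariant_general h2 !![α, β; γ, δ]
      (P := ⟨a₀, a₁, a₂, a₃⟩) (P' := ⟨a₀', a₁', a₂', a₃'⟩) htrans
end

section
/- Let A be a commutative ring in which 2 = 0, let a₀, a₁, a₂, a₃, b₀, …, b₆ ∈ A and let v₀, v₁, v₂, v₃ ∈ A. Define b̃₀, …, b̃₆ ∈ A by the identity Σⱼ b̃ⱼ x₁^{6−j}x₂^j = Σⱼ bⱼ x₁^{6−j}x₂^j + v² + a·v in A[x₁,x₂], where a = Σᵢ aᵢ x₁^{3−i}x₂^i and v = Σᵢ vᵢ x₁^{3−i}x₂^i. Then K₃(a₀,…,a₃, b̃₀,…,b̃₆) = K₃(a₀,…,a₃, b₀,…,b₆): the invariant K₃ is invariant under the substitution b ↦ b + v² + av coming from the change of variable y ↦ y + v in the equation y² + ay = b. -/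
/-!
For fixed `a`, `K₃ = K₁ b₃² + ℓ(b)` with `ℓ` linear, so in characteristic 2 it is additive in `b`
and it suffices that `K₃(a, v²) + K₃(a, av) = 0`. Both terms equal `K₁ · (av)₃²`, where `(av)₃` is
the middle coefficient of `av`. For `v²` this is the additivity of squaring. For `av` it says that
`ℓ(av) = 0`: the coefficients `ℓ₀, …, ℓ₆` of `ℓ` satisfy the linear recurrence
`a₀ ℓᵢ + a₁ ℓᵢ₊₁ + a₂ ℓᵢ₊₂ + a₃ ℓᵢ₊₃ = 0`, whose left side is the coefficient of `vᵢ` in `ℓ(av)`.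
-/

open MvPolynomial

/-- The invariant `K₃` of a pair `(a, b)` of a binary cubic and a binary sextic. -/
def K₃ {A : Type*} [CommRing A] (a₀ a₁ a₂ a₃ b₀ b₁ b₂ b₃ b₄ b₅ b₆ : A) : A :=
  (a₀ * a₃ + a₁ * a₂) * b₃ ^ 2
    + (a₀ ^ 2 * a₃ ^ 2 + a₀ * a₂ ^ 3 + a₁ ^ 3 * a₃ + a₁ ^ 2 * a₂ ^ 2) * b₃
    + (a₀ * a₃ + a₁ * a₂) * a₁ ^ 2 * b₄
    + (a₀ * a₃ + a₁ * a₂) * a₂ ^ 2 * b₂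
    + (a₀ ^ 2 * a₁ * a₃ + a₀ ^ 2 * a₂ ^ 2 + a₀ * a₁ ^ 2 * a₂ + a₁ ^ 4) * b₅
    + (a₀ * a₂ * a₃ ^ 2 + a₁ ^ 2 * a₃ ^ 2 + a₁ * a₂ ^ 2 * a₃ + a₂ ^ 4) * b₁
    + (a₀ * a₃ + a₁ * a₂) * a₀ ^ 2 * b₆
    + (a₀ * a₃ + a₁ * a₂) * a₃ ^ 2 * b₀

section BinaryForm

variable {A : Type*} [CommSemiring A] {n : ℕ}

/-- The binary form `∑ᵢ cᵢ x₁^{n-i} x₂^i` of degree `n` with coefficient vector `c`; the variables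
`x₁`, `x₂` are `X 0`, `X 1`. -/
noncomputable def binaryForm (c : Fin (n + 1) → A) : MvPolynomial (Fin 2) A :=
  ∑ i, C (c i) * X 0 ^ (n - i : ℕ) * X 1 ^ (i : ℕ)

lemma aeval_one_X_binaryForm (c : Fin (n + 1) → A) :
    aeval ![1, Polynomial.X] (binaryForm c) =
      ∑ i, Polynomial.C (c i) * Polynomial.X ^ (i : ℕ) := by
  simp [binaryForm]

lemma binaryForm_injective :
    Function.Injective (binaryForm : (Fin (n + 1) → A) → MvPolynomial (Fin 2) A) := by
  intro c d h
  have dehomogenized := congrArg (aeval ![1, (Polynomial.X : Polynomial A)]) h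
  rw [aeval_one_X_binaryForm, aeval_one_X_binaryForm] at dehomogenized
  funext k
  simpa [Polynomial.coeff_X_pow, Fin.val_inj] using
    congrArg (Polynomial.coeff · (k : ℕ)) dehomogenized

lemma binaryForm_add (c d : Fin (n + 1) → A) :
    binaryForm (c + d) = binaryForm c + binaryForm d := by
  simp [binaryForm, add_mul, Finset.sum_add_distrib]

lemma binaryForm_cubic (c₀ c₁ c₂ c₃ : A) :
    binaryForm ![c₀, c₁, c₂, c₃] =
      C c₀ * X 0 ^ 3 + C c₁ * X 0 ^ 2 * X 1 + C c₂ * X 0 * X 1 ^ 2 + C c₃ * X 1 ^ 3 := by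
  simp [binaryForm, Fin.sum_univ_succ, add_assoc]

lemma binaryForm_sextic (c₀ c₁ c₂ c₃ c₄ c₅ c₆ : A) :
    binaryForm ![c₀, c₁, c₂, c₃, c₄, c₅, c₆] =
      C c₀ * X 0 ^ 6 + C c₁ * X 0 ^ 5 * X 1 + C c₂ * X 0 ^ 4 * X 1 ^ 2
        + C c₃ * X 0 ^ 3 * X 1 ^ 3 + C c₄ * X 0 ^ 2 * X 1 ^ 4 + C c₅ * X 0 * X 1 ^ 5
        + C c₆ * X 1 ^ 6 := by
  simp [binaryForm, Fin.sum_univ_succ, add_assoc]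

lemma binaryForm_cubic_mul (a₀ a₁ a₂ a₃ v₀ v₁ v₂ v₃ : A) :
    binaryForm ![a₀, a₁, a₂, a₃] * binaryForm ![v₀, v₁, v₂, v₃] =
      binaryForm ![a₀ * v₀, a₀ * v₁ + a₁ * v₀, a₀ * v₂ + a₁ * v₁ + a₂ * v₀,
        a₀ * v₃ + a₁ * v₂ + a₂ * v₁ + a₃ * v₀, a₁ * v₃ + a₂ * v₂ + a₃ * v₁,
        a₂ * v₃ + a₃ * v₂, a₃ * v₃] := by
  simp only [binaryForm_cubic, binaryForm_sextic, map_add, map_mul]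
  ring

end BinaryForm

lemma binaryForm_cubic_sq {A : Type*} [CommRing A] (h2 : (2 : A) = 0) (v₀ v₁ v₂ v₃ : A) :
    binaryForm ![v₀, v₁, v₂, v₃] ^ 2 =
      binaryForm ![v₀ ^ 2, 0, v₁ ^ 2, 0, v₂ ^ 2, 0, v₃ ^ 2] := by
  rw [sq, binaryForm_cubic_mul]
  congr 1
  simp only [Matrix.vecCons_inj, and_true]
  exact ⟨by ring,
    by linear_combination v₀ * v₁ * h2,
    by linear_combination v₀ * v₂ * h2,
    by linear_combination (v₀ * v₃ + v₁ * v₂) * h2,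
    by linear_combination v₁ * v₃ * h2,
    by linear_combination v₂ * v₃ * h2,
    by ring⟩

section Invariant

variable {A : Type*} [CommRing A]

/-- The invariant `K₁` of a binary cubic; in characteristic 2 its square is the discriminant. -/
def K₁ (a₀ a₁ a₂ a₃ : A) : A :=
  a₀ * a₃ + a₁ * a₂

/-- The coefficients of `b₀, …, b₆` in the part of `K₃` that is linear in the sextic `b`. -/
def K₃LinearCoeff (a₀ a₁ a₂ a₃ : A) : Fin 7 → A :=
  ![K₁ a₀ a₁ a₂ a₃ * a₃ ^ 2,
    a₀ * a₂ * a₃ ^ 2 + a₁ ^ 2 * a₃ ^ 2 + a₁ * a₂ ^ 2 * a₃ + a₂ ^ 4,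
    K₁ a₀ a₁ a₂ a₃ * a₂ ^ 2,
    a₀ ^ 2 * a₃ ^ 2 + a₀ * a₂ ^ 3 + a₁ ^ 3 * a₃ + a₁ ^ 2 * a₂ ^ 2,
    K₁ a₀ a₁ a₂ a₃ * a₁ ^ 2,
    a₀ ^ 2 * a₁ * a₃ + a₀ ^ 2 * a₂ ^ 2 + a₀ * a₁ ^ 2 * a₂ + a₁ ^ 4,
    K₁ a₀ a₁ a₂ a₃ * a₀ ^ 2]

lemma K₃_eq_K₁_mul_sq_add_dotProduct (a₀ a₁ a₂ a₃ b₀ b₁ b₂ b₃ b₄ b₅ b₆ : A) :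
    K₃ a₀ a₁ a₂ a₃ b₀ b₁ b₂ b₃ b₄ b₅ b₆ =
      K₁ a₀ a₁ a₂ a₃ * b₃ ^ 2
        + K₃LinearCoeff a₀ a₁ a₂ a₃ ⬝ᵥ ![b₀, b₁, b₂, b₃, b₄, b₅, b₆] := by
  simp only [K₃, K₁, K₃LinearCoeff, Matrix.cons_dotProduct_cons, Matrix.dotProduct_of_isEmpty]
  ring

lemma K₃_add (h2 : (2 : A) = 0)
    (a₀ a₁ a₂ a₃ b₀ b₁ b₂ b₃ b₄ b₅ b₆ d₀ d₁ d₂ d₃ d₄ d₅ d₆ : A) :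
    K₃ a₀ a₁ a₂ a₃ (b₀ + d₀) (b₁ + d₁) (b₂ + d₂) (b₃ + d₃) (b₄ + d₄) (b₅ + d₅) (b₆ + d₆) =
      K₃ a₀ a₁ a₂ a₃ b₀ b₁ b₂ b₃ b₄ b₅ b₆ + K₃ a₀ a₁ a₂ a₃ d₀ d₁ d₂ d₃ d₄ d₅ d₆ := by
  unfold K₃
  linear_combination (a₀ * a₃ + a₁ * a₂) * b₃ * d₃ * h2

lemma K₃_cubic_sq (h2 : (2 : A) = 0) (a₀ a₁ a₂ a₃ v₀ v₁ v₂ v₃ : A) :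
    K₃ a₀ a₁ a₂ a₃ (v₀ ^ 2) 0 (v₁ ^ 2) 0 (v₂ ^ 2) 0 (v₃ ^ 2) =
      K₁ a₀ a₁ a₂ a₃ * (a₀ * v₃ + a₁ * v₂ + a₂ * v₁ + a₃ * v₀) ^ 2 := by
  have sq_middle : (a₀ * v₃ + a₁ * v₂ + a₂ * v₁ + a₃ * v₀) ^ 2 =
      a₀ ^ 2 * v₃ ^ 2 + a₁ ^ 2 * v₂ ^ 2 + a₂ ^ 2 * v₁ ^ 2 + a₃ ^ 2 * v₀ ^ 2 := by
    linear_combination (a₀ * v₃ * (a₁ * v₂ + a₂ * v₁ + a₃ * v₀) + a₁ * v₂ * (a₂ * v₁ + a₃ * v₀)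
      + a₂ * v₁ * (a₃ * v₀)) * h2
  rw [sq_middle, K₃, K₁]
  ring

lemma K₃LinearCoeff_recurrence (h2 : (2 : A) = 0) (a₀ a₁ a₂ a₃ : A) :
    let ℓ := K₃LinearCoeff a₀ a₁ a₂ a₃
    a₀ * ℓ 0 + a₁ * ℓ 1 + a₂ * ℓ 2 + a₃ * ℓ 3 = 0 ∧
      a₀ * ℓ 1 + a₁ * ℓ 2 + a₂ * ℓ 3 + a₃ * ℓ 4 = 0 ∧
      a₀ * ℓ 2 + a₁ * ℓ 3 + a₂ * ℓ 4 + a₃ * ℓ 5 = 0 ∧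
      a₀ * ℓ 3 + a₁ * ℓ 4 + a₂ * ℓ 5 + a₃ * ℓ 6 = 0 := by
  simp only [K₃LinearCoeff, K₁, Matrix.cons_val]
  refine ⟨?_, ?_, ?_, ?_⟩
  · linear_combination (a₀ ^ 2 * a₃ ^ 3 + a₀ * a₁ * a₂ * a₃ ^ 2 + a₁ ^ 3 * a₃ ^ 2
      + a₁ ^ 2 * a₂ ^ 2 * a₃ + a₁ * a₂ ^ 4 + a₀ * a₂ ^ 3 * a₃) * h2
  · linear_combination (a₀ ^ 2 * a₂ * a₃ ^ 2 + a₀ * a₁ ^ 2 * a₃ ^ 2 + a₀ * a₁ * a₂ ^ 2 * a₃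
      + a₀ * a₂ ^ 4 + a₁ ^ 2 * a₂ ^ 3 + a₁ ^ 3 * a₂ * a₃) * h2
  · linear_combination (a₀ ^ 2 * a₁ * a₃ ^ 2 + a₀ ^ 2 * a₂ ^ 2 * a₃ + a₀ * a₁ ^ 2 * a₂ * a₃
      + a₁ ^ 4 * a₃ + a₁ ^ 3 * a₂ ^ 2 + a₀ * a₁ * a₂ ^ 3) * h2
  · linear_combination (a₀ ^ 3 * a₃ ^ 2 + a₀ ^ 2 * a₁ * a₂ * a₃ + a₀ ^ 2 * a₂ ^ 3
      + a₀ * a₁ ^ 2 * a₂ ^ 2 + a₁ ^ 4 * a₂ + a₀ * a₁ ^ 3 * a₃) * h2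

lemma K₃LinearCoeff_dotProduct_cubic_mul (h2 : (2 : A) = 0) (a₀ a₁ a₂ a₃ v₀ v₁ v₂ v₃ : A) :
    K₃LinearCoeff a₀ a₁ a₂ a₃ ⬝ᵥ
      ![a₀ * v₀, a₀ * v₁ + a₁ * v₀, a₀ * v₂ + a₁ * v₁ + a₂ * v₀,
        a₀ * v₃ + a₁ * v₂ + a₂ * v₁ + a₃ * v₀, a₁ * v₃ + a₂ * v₂ + a₃ * v₁,
        a₂ * v₃ + a₃ * v₂, a₃ * v₃] = 0 := by
  obtain ⟨coeff_v₀, coeff_v₁, coeff_v₂, coeff_v₃⟩ := K₃LinearCoeff_recurrence h2 a₀ a₁ a₂ a₃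
  simp only [dotProduct, Fin.sum_univ_seven, Matrix.cons_val]
  linear_combination v₀ * coeff_v₀ + v₁ * coeff_v₁ + v₂ * coeff_v₂ + v₃ * coeff_v₃

lemma K₃_cubic_mul (h2 : (2 : A) = 0) (a₀ a₁ a₂ a₃ v₀ v₁ v₂ v₃ : A) :
    K₃ a₀ a₁ a₂ a₃ (a₀ * v₀) (a₀ * v₁ + a₁ * v₀) (a₀ * v₂ + a₁ * v₁ + a₂ * v₀)
        (a₀ * v₃ + a₁ * v₂ + a₂ * v₁ + a₃ * v₀) (a₁ * v₃ + a₂ * v₂ + a₃ * v₁)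
        (a₂ * v₃ + a₃ * v₂) (a₃ * v₃) =
      K₁ a₀ a₁ a₂ a₃ * (a₀ * v₃ + a₁ * v₂ + a₂ * v₁ + a₃ * v₀) ^ 2 := by
  rw [K₃_eq_K₁_mul_sq_add_dotProduct, K₃LinearCoeff_dotProduct_cubic_mul h2, add_zero]

end Invariant

/-- In characteristic 2, the invariant `K₃` is invariant under the substitution
`b ↦ b + v² + av` coming from the change of variable `y ↦ y + v` in `y² + ay = b`. -/
theorem K3_invariant_under_y_shift (A : Type*) [CommRing A] (h2 : (2 : A) = 0)
    (a₀ a₁ a₂ a₃ b₀ b₁ b₂ b₃ b₄ b₅ b₆ v₀ v₁ v₂ v₃ : A)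
    (b₀' b₁' b₂' b₃' b₄' b₅' b₆' : A)
    (htrans :
      (C b₀' * X 0 ^ 6 + C b₁' * X 0 ^ 5 * X 1 + C b₂' * X 0 ^ 4 * X 1 ^ 2
        + C b₃' * X 0 ^ 3 * X 1 ^ 3 + C b₄' * X 0 ^ 2 * X 1 ^ 4 + C b₅' * X 0 * X 1 ^ 5
        + C b₆' * X 1 ^ 6 : MvPolynomial (Fin 2) A) =
      (C b₀ * X 0 ^ 6 + C b₁ * X 0 ^ 5 * X 1 + C b₂ * X 0 ^ 4 * X 1 ^ 2
        + C b₃ * X 0 ^ 3 * X 1 ^ 3 + C b₄ * X 0 ^ 2 * X 1 ^ 4 + C b₅ * X 0 * X 1 ^ 5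
        + C b₆ * X 1 ^ 6)
      + (C v₀ * X 0 ^ 3 + C v₁ * X 0 ^ 2 * X 1 + C v₂ * X 0 * X 1 ^ 2 + C v₃ * X 1 ^ 3) ^ 2
      + (C a₀ * X 0 ^ 3 + C a₁ * X 0 ^ 2 * X 1 + C a₂ * X 0 * X 1 ^ 2 + C a₃ * X 1 ^ 3)
        * (C v₀ * X 0 ^ 3 + C v₁ * X 0 ^ 2 * X 1 + C v₂ * X 0 * X 1 ^ 2 + C v₃ * X 1 ^ 3)) :
    K₃ a₀ a₁ a₂ a₃ b₀' b₁' b₂' b₃' b₄' b₅' b₆' = K₃ a₀ a₁ a₂ a₃ b₀ b₁ b₂ b₃ b₄ b₅ b₆ := by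
  simp only [← binaryForm_sextic, ← binaryForm_cubic, binaryForm_cubic_sq h2,
    binaryForm_cubic_mul, ← binaryForm_add] at htrans
  have coeffs := binaryForm_injective htrans
  simp only [Matrix.cons_add_cons, Matrix.empty_add_empty, Matrix.vecCons_inj, and_true] at coeffs
  obtain ⟨rfl, rfl, rfl, rfl, rfl, rfl, rfl⟩ := coeffs
  rw [K₃_add h2, K₃_add h2, K₃_cubic_sq h2, K₃_cubic_mul h2, add_assoc, ← two_mul, h2,
    zero_mul, add_zero]
end

section
/- In the polynomial ring ℤ[a₀, a₁, a₂, a₃, b₀, …, b₆], define cᵢ = 4bᵢ + Σ_{0 ≤ r,s ≤ 3, r+s=i} a_r a_s for 0 ≤ i ≤ 6 (the sum over ordered pairs (r,s)). Then there exists Q ∈ ℤ[a₀, …, a₃, b₀, …, b₆] such that −120·c₀c₆ + 20·c₁c₅ − 8·c₂c₄ + 3·c₃² = 4·Q, and the image of Q under the reduction map ℤ[a₀,…,b₆] → 𝔽₂[a₀,…,b₆] equals (a₀a₃ + a₁a₂)². In other words, the Igusa invariant J₂ = 2⁻²(−120c₀c₆ + 20c₁c₅ − 8c₂c₄ + 3c₃²)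 of the binary sextic ã² + 4b̃ reduces modulo 2 to the invariant K₂ = K₁², where K₁ = a₀a₃ + a₁a₂. -/
/-!
The terms of `∑_{r+s=i} a_r a_s` pair off under `(r, s) ↔ (s, r)` when `i` is odd, so the odd
coefficients of `ã² + 4b̃` are even. In particular `c₁ = 2e` and `c₃ = 2d` with `d = 2b₃ + K₁`.
Hence `J₂ = -30c₀c₆ + 10ec₅ - 2c₂c₄ + 3d²`, and modulo 2 only `d² ≡ K₁²` survives.
-/

open MvPolynomial

/-- The coefficient `a_i` of the universal binary cubic, as a variable in
`ℤ[a₀,…,a₃,b₀,…,b₆]`. -/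
noncomputable def aVar (i : Fin 4) : MvPolynomial (Fin 4 ⊕ Fin 7) ℤ := X (Sum.inl i)

/-- The coefficient `b_j` of the universal binary sextic, as a variable in
`ℤ[a₀,…,a₃,b₀,…,b₆]`. -/
noncomputable def bVar (j : Fin 7) : MvPolynomial (Fin 4 ⊕ Fin 7) ℤ := X (Sum.inr j)

/-- `c_i = 4 b_i + Σ_{r+s=i} a_r a_s`, the `i`-th coefficient of the binary sextic
`ã² + 4b̃`. -/
noncomputable def cVar (i : Fin 7) : MvPolynomial (Fin 4 ⊕ Fin 7) ℤ :=
  4 * bVar i + ∑ p : Fin 4 × Fin 4, if (p.1 : ℕ) + (p.2 : ℕ) = (i : ℕ)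
    then aVar p.1 * aVar p.2 else 0

theorem sum_eq_two_mul_sum_lt_of_symm {ι R : Type*} [Fintype ι] [LinearOrder ι]
    [NonAssocSemiring R] (f : ι × ι → R) (hswap : ∀ p, f p.swap = f p) (hdiag : ∀ i, f (i, i) = 0) :
    ∑ p, f p = 2 * ∑ p with p.1 < p.2, f p := by
  have hsupport : ∑ p with ¬p.1 < p.2, f p = ∑ p with p.2 < p.1, f p := by
    refine (Finset.sum_subset (fun p => ?_) ?_).symm
    · simpa using le_of_lt
    · rintro ⟨i, j⟩ hge hnot_gt
      simp only [Finset.mem_filter_univ, not_lt] at hge hnot_gt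
      obtain rfl : i = j := le_antisymm hnot_gt hge
      exact hdiag i
  have hreflect : ∑ p with p.2 < p.1, f p = ∑ p with p.1 < p.2, f p :=
    Finset.sum_equiv (Equiv.prodComm ι ι) (by simp) fun p _ => (hswap p).symm
  rw [← Finset.sum_filter_add_sum_filter_not _ (fun p : ι × ι => p.1 < p.2), hsupport, hreflect,
    two_mul]

theorem sum_mul_of_add_eq_odd {R : Type*} [CommSemiring R] {n i : ℕ} (a : Fin n → R)
    (hi : Odd i) :
    (∑ p : Fin n × Fin n, if (p.1 : ℕ) + (p.2 : ℕ) = i then a p.1 * a p.2 else 0) =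
      2 * ∑ p : Fin n × Fin n with p.1 < p.2,
        if (p.1 : ℕ) + (p.2 : ℕ) = i then a p.1 * a p.2 else 0 := by
  refine sum_eq_two_mul_sum_lt_of_symm _ (fun p => ?_) fun r => if_neg ?_
  · simp only [Prod.fst_swap, Prod.snd_swap, add_comm, mul_comm]
  · rintro rfl
    exact Nat.not_odd_iff_even.mpr (Even.add_self _) hi

theorem cVar_of_odd {i : Fin 7} (hi : Odd (i : ℕ)) :
    cVar i = 2 * (2 * bVar i + ∑ p : Fin 4 × Fin 4 with p.1 < p.2,
      if (p.1 : ℕ) + (p.2 : ℕ) = i then aVar p.1 * aVar p.2 else 0) := by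
  rw [cVar, sum_mul_of_add_eq_odd aVar hi]
  ring

/-- The invariant `K₁ = a₀a₃ + a₁a₂` of a binary cubic, as a function of its coefficients in an
arbitrary ring, so that it can be formed both over `ℤ` and over `𝔽₂`. -/
def cubicK₁ {R : Type*} [Semiring R] (a : Fin 4 → R) : R := a 0 * a 3 + a 1 * a 2

theorem map_cubicK₁ {R S : Type*} [Semiring R] [Semiring S] (f : R →+* S) (a : Fin 4 → R) :
    f (cubicK₁ a) = cubicK₁ (f ∘ a) := by
  simp only [cubicK₁, map_add, map_mul, Function.comp_apply]

theorem cVar_three_eq : cVar 3 = 2 * (2 * bVar 3 + cubicK₁ aVar) := by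
  have hpairs : (∑ p : Fin 4 × Fin 4 with p.1 < p.2,
      if (p.1 : ℕ) + (p.2 : ℕ) = (3 : Fin 7) then aVar p.1 * aVar p.2 else 0) = cubicK₁ aVar := by
    rw [← Finset.sum_filter, Finset.filter_filter,
      show ({p | p.1 < p.2 ∧ (p.1 : ℕ) + (p.2 : ℕ) = (3 : Fin 7)} : Finset (Fin 4 × Fin 4)) =
        {(0, 3), (1, 2)} by decide,
      Finset.sum_pair (by decide), cubicK₁]
  rw [cVar_of_odd (by decide), hpairs]

theorem igusaJ₂_numerator_of_even {R : Type*} [CommRing R] (c₀ c₂ c₄ c₅ c₆ d e : R) :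
    (-120) * c₀ * c₆ + 20 * (2 * e) * c₅ - 8 * c₂ * c₄ + 3 * (2 * d) ^ 2 =
      4 * (d ^ 2 + 2 * (-15 * c₀ * c₆ + 5 * e * c₅ - c₂ * c₄ + d ^ 2)) := by
  ring

theorem map_add_two_mul_of_charTwo {R S : Type*} [NonAssocSemiring R] [NonAssocSemiring S]
    [CharP S 2] (f : R →+* S) (x y : R) : f (x + 2 * y) = f x := by
  rw [map_add, map_mul, map_ofNat, CharTwo.two_eq_zero, zero_mul, add_zero]

/-- The Igusa invariant `J₂ = 2⁻²(−120c₀c₆ + 20c₁c₅ − 8c₂c₄ + 3c₃²)` of the binary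
sextic `ã² + 4b̃` is integral (the quantity in brackets is divisible by 4) and reduces
modulo 2 to the invariant `K₂ = K₁² = (a₀a₃ + a₁a₂)²`. -/
theorem J2_reduces_to_K1_sq :
    ∃ Q : MvPolynomial (Fin 4 ⊕ Fin 7) ℤ,
      (-120) * cVar 0 * cVar 6 + 20 * cVar 1 * cVar 5 - 8 * cVar 2 * cVar 4
          + 3 * cVar 3 ^ 2 = 4 * Q ∧
      MvPolynomial.map (Int.castRingHom (ZMod 2)) Q =
        (X (Sum.inl 0) * X (Sum.inl 3) + X (Sum.inl 1) * X (Sum.inl 2)) ^ 2 := by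
  obtain ⟨e, he⟩ : ∃ e, cVar 1 = 2 * e := ⟨_, cVar_of_odd (by decide)⟩
  rw [he, cVar_three_eq, igusaJ₂_numerator_of_even]
  refine ⟨_, rfl, ?_⟩
  rw [map_add_two_mul_of_charTwo, map_pow, add_comm (2 * bVar 3), map_add_two_mul_of_charTwo,
    map_cubicK₁]
  simp only [cubicK₁, Function.comp_apply, aVar, map_X]
end

section
/- For each natural number k let r(k) be the number of quintuples (a, b, c, d, e) of natural numbers with a + 10b + 12c + 13d + 48e = k and d ≤ 3, and let c(k) = ⌊k/12⌋ + 1. Then for every k ≥ 10 whose residue modulo 12 is not 0, 1 or 2, one has r(k) − r(k − 10) = c(k)·(c(k) + 1)/2. -/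
/-!
Since `13 * d + 48 * e = 12 * m + m % 4` for `m = d + 4 * e`, and `d ≤ 3` makes `(d, e)` and `m`
determine each other, `r k` is the number of triples `(b, x, m)` such that
`10 * b + (12 * (x + m) + m % 4) ≤ k`; here `x` is the exponent of `χ₁₂`, and the exponent `a`
of `ψ₁` takes up the slack. The triples with `b ≠ 0` are counted by `r (k - 10)`. For `b = 0` the
term `m % 4 ≤ 3 ≤ k % 12` does not affect the inequality, which becomes `x + m ≤ k / 12`; the number
of such pairs is a triangular number.
-/

/-- `r k` is the number of quintuples `(a, b, c, d, e)` of natural numbers with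
`a + 10b + 12c + 13d + 48e = k` and `d ≤ 3`. -/
noncomputable def r (k : ℕ) : ℕ :=
  Nat.card {q : ℕ × ℕ × ℕ × ℕ × ℕ //
    q.1 + 10 * q.2.1 + 12 * q.2.2.1 + 13 * q.2.2.2.1 + 48 * q.2.2.2.2 = k ∧
    q.2.2.2.1 ≤ 3}

/-- `c k = ⌊k/12⌋ + 1`, the dimension of the space of elliptic modular forms of
weight `k` in characteristic 2. -/
def c (k : ℕ) : ℕ := k / 12 + 1

section LinearInequality

variable {α : Type*} {f : α → ℕ} {k w : ℕ}

lemma finite_setOf_mul_add_le (hw : 0 < w) (hf : {x | f x ≤ k}.Finite) :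
    {p : ℕ × α | w * p.1 + f p.2 ≤ k}.Finite := by
  refine ((Set.finite_Iic k).prod hf).subset fun p hp ↦ ⟨?_, (Nat.le_add_left _ _).trans hp⟩
  exact (Nat.le_mul_of_pos_left _ hw).trans (le_of_add_le_left hp)

lemma setOf_mul_add_le_add_self (f : α → ℕ) (k w : ℕ) :
    {p : ℕ × α | w * p.1 + f p.2 ≤ k + w} =
      Prod.map Nat.succ id '' {p : ℕ × α | w * p.1 + f p.2 ≤ k} ∪
        Prod.mk 0 '' {x | f x ≤ k + w} := by
  ext ⟨b, x⟩
  cases b with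
  | zero => simp
  | succ b => simp [Nat.mul_succ, add_right_comm _ w]

lemma ncard_setOf_mul_add_le_add_self (hw : 0 < w) (hf : {x | f x ≤ k + w}.Finite) :
    {p : ℕ × α | w * p.1 + f p.2 ≤ k + w}.ncard =
      {p : ℕ × α | w * p.1 + f p.2 ≤ k}.ncard + {x | f x ≤ k + w}.ncard := by
  have hfk : {x | f x ≤ k}.Finite := hf.subset fun x hx ↦ hx.trans (Nat.le_add_right k w)
  have hdisj : Disjoint (Prod.map Nat.succ id '' {p : ℕ × α | w * p.1 + f p.2 ≤ k})
      (Prod.mk 0 '' {x | f x ≤ k + w}) := by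
    rw [Set.disjoint_left]
    rintro _ ⟨p, -, rfl⟩ ⟨x, -, h⟩
    exact Nat.succ_ne_zero p.1 (congrArg Prod.fst h).symm
  rw [setOf_mul_add_le_add_self,
    Set.ncard_union_eq hdisj ((finite_setOf_mul_add_le hw hfk).image _) (hf.image _),
    Set.ncard_image_of_injective _ (Nat.succ_injective.prodMap Function.injective_id),
    Set.ncard_image_of_injective _ (Prod.mk_right_injective 0)]

lemma finite_setOf_add_le (n : ℕ) : {p : ℕ × ℕ | p.1 + p.2 ≤ n}.Finite := by
  simpa using finite_setOf_mul_add_le one_pos (Set.finite_Iic n)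

lemma ncard_setOf_add_le (n : ℕ) : {p : ℕ × ℕ | p.1 + p.2 ≤ n}.ncard = (n + 2).choose 2 := by
  induction n with
  | zero =>
    have h : {p : ℕ × ℕ | p.1 + p.2 ≤ 0} = {(0, 0)} := by
      ext ⟨i, j⟩
      simp
    rw [h, Set.ncard_singleton, Nat.choose_self]
  | succ n ih =>
    have hIic : {j : ℕ | j ≤ n + 1}.ncard = n + 2 := by
      rw [Set.Iic_def, ← Finset.coe_Iic, Set.ncard_coe_finset, Nat.card_Iic]
    have hsplit := ncard_setOf_mul_add_le_add_self (f := id) one_pos (Set.finite_Iic (n + 1))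
    simp only [one_mul, id_eq] at hsplit
    rw [hsplit, ih, hIic, Nat.choose_succ_succ' (n + 2) 1, Nat.choose_one_right, add_comm]

lemma mul_add_le_iff_le_div {n d : ℕ} (hw : 0 < w) (hd : d ≤ k % w) :
    w * n + d ≤ k ↔ n ≤ k / w := by
  constructor
  · intro h
    exact (Nat.le_div_iff_mul_le hw).2 (mul_comm w n ▸ le_of_add_le_left h)
  · intro h
    calc
      w * n + d ≤ w * (k / w) + k % w := add_le_add (Nat.mul_le_mul_left w h) hd
      _ = k := Nat.div_add_mod k w

end LinearInequality

lemma r_eq_ncard (k : ℕ) :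
    r k = {p : ℕ × ℕ × ℕ | 10 * p.1 + (12 * (p.2.1 + p.2.2) + p.2.2 % 4) ≤ k}.ncard :=
  Nat.card_congr
    { toFun := fun ⟨(_, b, x, d, e), h⟩ ↦ ⟨(b, x, d + 4 * e), by grind⟩
      invFun := fun ⟨(b, x, m), h⟩ ↦
        ⟨(k - (10 * b + (12 * (x + m) + m % 4)), b, x, m % 4, m / 4), by grind⟩
      left_inv := by
        rintro ⟨⟨a, b, x, d, e⟩, h⟩
        dsimp only at h
        simp only [Subtype.mk.injEq, Prod.mk.injEq, true_and]
        omega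
      right_inv := by
        rintro ⟨⟨b, x, m⟩, -⟩
        simp only [Subtype.mk.injEq, Prod.mk.injEq, true_and]
        exact Nat.mod_add_div m 4 }

lemma r_add_ten (k : ℕ) :
    r (k + 10) = r k + {p : ℕ × ℕ | 12 * (p.1 + p.2) + p.2 % 4 ≤ k + 10}.ncard := by
  have hfin : {p : ℕ × ℕ | 12 * (p.1 + p.2) + p.2 % 4 ≤ k + 10}.Finite :=
    (finite_setOf_add_le (k + 10)).subset fun p hp ↦ by
      rw [Set.mem_ofPred_eq] at hp ⊢
      omega
  rw [r_eq_ncard, r_eq_ncard, ncard_setOf_mul_add_le_add_self (by norm_num) hfin]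

lemma ncard_setOf_twelve_mul_add_mod_four_le {k : ℕ} (hk : 3 ≤ k % 12) :
    {p : ℕ × ℕ | 12 * (p.1 + p.2) + p.2 % 4 ≤ k}.ncard = c k * (c k + 1) / 2 := by
  have hset : {p : ℕ × ℕ | 12 * (p.1 + p.2) + p.2 % 4 ≤ k} = {p | p.1 + p.2 ≤ k / 12} := by
    ext p
    have hmod : p.2 % 4 ≤ 3 := Nat.le_of_lt_succ (Nat.mod_lt p.2 (by norm_num))
    exact mul_add_le_iff_le_div (by norm_num) (hmod.trans hk)
  rw [hset, ncard_setOf_add_le, Nat.choose_two_right, mul_comm]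
  rfl

/-- For `k ≥ 10` with `k mod 12 ∉ {0, 1, 2}` one has
`r(k) − r(k−10) = c(k)(c(k)+1)/2`. -/
theorem r_difference (k : ℕ) (hk : 10 ≤ k)
    (h0 : k % 12 ≠ 0) (h1 : k % 12 ≠ 1) (h2 : k % 12 ≠ 2) :
    r k = r (k - 10) + c k * (c k + 1) / 2 := by
  have hmod : 3 ≤ k % 12 := by omega
  obtain ⟨n, rfl⟩ := Nat.exists_eq_add_of_le' hk
  rw [r_add_ten, Nat.add_sub_cancel, ncard_setOf_twelve_mul_add_mod_four_le hmod]
end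

section
/- The polynomial R = X₁₃⁴ + X₁³X₁₀X₁₃³ + X₁⁴X₄₈ + X₁₀⁴X₁₂ is irreducible in the polynomial ring 𝔽₂[X₁, X₁₀, X₁₂, X₁₃, X₄₈]; equivalently, the quotient ring 𝔽₂[X₁, X₁₀, X₁₂, X₁₃, X₄₈]/(R) is an integral domain. -/
/-!
`R` has degree one in `X₄₈`, with leading coefficient `X₁⁴` and constant term
`g = X₁₃⁴ + X₁³X₁₀X₁₃³ + X₁₀⁴X₁₂`. A polynomial of degree one in a variable is irreducible as soon
as these two coefficients have no common factor. Since `X₁` is prime, it is enough that `X₁ ∤ g`,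
and indeed `g` takes the value `1` at the point with `X₁₃ = 1` and all other coordinates `0`.
-/

open MvPolynomial

theorem isRelPrime_pow_left_of_prime {M : Type*} [CommMonoidWithZero M] [IsCancelMulZero M]
    {p a : M} (hp : Prime p) (hpa : ¬ p ∣ a) (n : ℕ) : IsRelPrime (p ^ n) a := by
  intro d hd hda
  obtain ⟨k, -, hk⟩ := (dvd_prime_pow hp n).1 hd
  obtain rfl : k = 0 := by
    by_contra hk0
    exact hpa ((dvd_pow_self p hk0).trans (hk.symm.dvd.trans hda))
  rwa [pow_zero, associated_one_iff_isUnit] at hk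

section

variable {σ R : Type*}

theorem not_dvd_of_eval_eq_zero_of_eval_ne_zero [CommSemiring R] {p q : MvPolynomial σ R}
    {x : σ → R} (hp : eval x p = 0) (hq : eval x q ≠ 0) : ¬ p ∣ q := by
  intro hpq
  have hdvd : eval x p ∣ eval x q := map_dvd (eval x) hpq
  exact hq (zero_dvd_iff.1 (hp ▸ hdvd))

theorem mem_supported_compl_singleton_iff [CommSemiring R] {p : MvPolynomial σ R} {i : σ} :
    p ∈ supported R {i}ᶜ ↔ i ∉ p.vars := by
  rw [mem_supported, Set.subset_compl_singleton_iff, Finset.mem_coe]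

theorem irreducible_pow_mul_X_add_of_prime [CommRing R] [IsDomain R] {p g : MvPolynomial σ R}
    {i : σ} (hp : Prime p) (hpi : p ∈ supported R {i}ᶜ) (hgi : g ∈ supported R {i}ᶜ)
    (hpg : ¬ p ∣ g) (n : ℕ) : Irreducible (p ^ n * X i + g) :=
  irreducible_mul_X_add (p ^ n) g i (pow_ne_zero n hp.ne_zero)
    (mem_supported_compl_singleton_iff.1 (pow_mem hpi n))
    (mem_supported_compl_singleton_iff.1 hgi)
    (isRelPrime_pow_left_of_prime hp hpg n)

end

theorem Rrel_irreducible_general {K : Type*} [CommRing K] [IsDomain K] :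
    Irreducible
      (X 3 ^ 4 + X 0 ^ 3 * X 1 * X 3 ^ 3 + X 0 ^ 4 * X 4 + X 1 ^ 4 * X 2 :
        MvPolynomial (Fin 5) K) := by
  let g : MvPolynomial (Fin 5) K := X 3 ^ 4 + X 0 ^ 3 * X 1 * X 3 ^ 3 + X 1 ^ 4 * X 2
  have hX (j : Fin 5) (hj : j ≠ 4) : (X j : MvPolynomial (Fin 5) K) ∈ supported K {4}ᶜ :=
    X_mem_supported.2 hj
  have h0 := hX 0 (by decide)
  have h1 := hX 1 (by decide)
  have h2 := hX 2 (by decide)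
  have h3 := hX 3 (by decide)
  have hg : g ∈ supported K {4}ᶜ :=
    add_mem (add_mem (pow_mem h3 4) (mul_mem (mul_mem (pow_mem h0 3) h1) (pow_mem h3 3)))
      (mul_mem (pow_mem h1 4) h2)
  have hndvd : ¬ X 0 ∣ g :=
    not_dvd_of_eval_eq_zero_of_eval_ne_zero (x := Pi.single 3 1) (by simp) (by simp [g])
  have hirr : Irreducible (X 0 ^ 4 * X 4 + g) :=
    irreducible_pow_mul_X_add_of_prime X_prime h0 hg hndvd 4
  convert hirr using 1
  ring

/-- The relation `R = X₁₃⁴ + X₁³X₁₀X₁₃³ + X₁⁴X₄₈ + X₁₀⁴X₁₂` is irreducible in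
`𝔽₂[X₁, X₁₀, X₁₂, X₁₃, X₄₈]`, where the variables `X₁, X₁₀, X₁₂, X₁₃, X₄₈` are
`X 0, X 1, X 2, X 3, X 4`. -/
theorem Rrel_irreducible :
    Irreducible
      (X 3 ^ 4 + X 0 ^ 3 * X 1 * X 3 ^ 3 + X 0 ^ 4 * X 4 + X 1 ^ 4 * X 2 :
        MvPolynomial (Fin 5) (ZMod 2)) :=
  Rrel_irreducible_general
end
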